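/- arXiv:2308.13748 — 2 statements merged into one kernel-verified Lean document; each statement's English description precedes it below -/
import Mathlib

section
/- For any continuous map f from the n-sphere S^n to R^n, there exists a point x in S^n such that f(x) = f(-x). -/
namespace BU

section chain
variable {V U : Type*}

/-- mod 2 coboundary on cochains of ordered tuples (lists), augmented. -/
def dl : (List V → ZMod 2) → List V → ZMod 2
  | _, [] => 0
  | φ, v :: l => φ l + dl (fun m => φ (v :: m)) l

/-- dual prism operator. -/
def pr (h0 h1 : V → V) : (List V → ZMod 2) → List V → ZMod 2
  | _, [] => 0
  | φ, v :: l => φ (h0 v :: h1 v :: l.map h1) + pr h0 h1 (fun m => φ (h0 v :: m)) l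

theorem two0 : (2 : ZMod 2) = 0 := by decide

theorem dl_add (φ ψ : List V → ZMod 2) (l : List V) :
    dl (fun m => φ m + ψ m) l = dl φ l + dl ψ l := by
  induction l generalizing φ ψ with
  | nil => simp [dl]
  | cons v l ih => simp only [dl, ih]; ring

theorem dl_zero (l : List V) : dl (fun _ => 0) l = 0 := by
  induction l with
  | nil => simp [dl]
  | cons v l ih => simp [dl, ih]

theorem dl_sum (N : ℕ) (φ : ℕ → List V → ZMod 2) (l : List V) :
    dl (fun m => ∑ i ∈ Finset.range N, φ i m) l = ∑ i ∈ Finset.range N, dl (φ i) l := by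
  induction N with
  | zero => simp [dl_zero]
  | succ N ih => simp only [Finset.sum_range_succ, dl_add, ih]

theorem dl_map (a : V → V) (φ : List V → ZMod 2) (l : List V) :
    dl (fun m => φ (m.map a)) l = dl φ (l.map a) := by
  induction l generalizing φ with
  | nil => simp [dl]
  | cons v l ih =>
    simp only [dl, List.map_cons]
    rw [ih (fun m => φ (a v :: m))]

theorem dl_dl (φ : List V → ZMod 2) (l : List V) : dl (dl φ) l = 0 := by
  induction l generalizing φ with
  | nil => simp [dl]
  | cons v l ih =>
    simp only [dl, dl_add, ih]
    linear_combination dl φ l * two0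

theorem dl_congr (S : Set V) (φ ψ : List V → ZMod 2)
    (h : ∀ l : List V, (∀ x ∈ l, x ∈ S) → φ l = ψ l) (l : List V) (hl : ∀ x ∈ l, x ∈ S) :
    dl φ l = dl ψ l := by
  induction l generalizing φ ψ with
  | nil => simp [dl]
  | cons v l ih =>
    have hv : v ∈ S := hl v (by simp)
    have hl' : ∀ x ∈ l, x ∈ S := fun x hx => hl x (by simp [hx])
    simp only [dl]
    rw [h l hl', ih (fun m => φ (v :: m)) (fun m => ψ (v :: m)) _ hl']
    intro m hm
    apply h
    intro x hx
    rcases List.mem_cons.1 hx with rfl | hx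
    · exact hv
    · exact hm x hx

theorem pr_add (h0 h1 : V → V) (φ ψ : List V → ZMod 2) (l : List V) :
    pr h0 h1 (fun m => φ m + ψ m) l = pr h0 h1 φ l + pr h0 h1 ψ l := by
  induction l generalizing φ ψ with
  | nil => simp [pr]
  | cons v l ih => simp only [pr, ih]; ring

theorem pr_zero (h0 h1 : V → V) (φ : List V → ZMod 2) (l : List V)
    (h : ∀ m : List V, (∀ y ∈ m, ∃ x ∈ l, y = h0 x ∨ y = h1 x) → φ m = 0) :
    pr h0 h1 φ l = 0 := by
  induction l generalizing φ with
  | nil => simp [pr]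
  | cons v l ih =>
    simp only [pr]
    rw [h, ih, add_zero]
    · intro m hm
      apply h
      intro y hy
      rcases List.mem_cons.1 hy with rfl | hy
      · exact ⟨v, by simp, Or.inl rfl⟩
      · obtain ⟨x, hx, hh⟩ := hm y hy
        exact ⟨x, by simp [hx], hh⟩
    · intro y hy
      simp only [List.mem_cons, List.mem_map] at hy
      rcases hy with rfl | rfl | ⟨x, hx, rfl⟩
      · exact ⟨v, by simp, Or.inl rfl⟩
      · exact ⟨v, by simp, Or.inr rfl⟩
      · exact ⟨x, by simp [hx], Or.inr rfl⟩

theorem prism (h0 h1 : V → V) (φ : List V → ZMod 2) (l : List V) :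
    pr h0 h1 (dl φ) l = φ (l.map h1) + φ (l.map h0) + dl (pr h0 h1 φ) l := by
  induction l generalizing φ with
  | nil => simp only [pr, dl, List.map_nil]; linear_combination - φ [] * two0
  | cons v l ih =>
    have e := ih (fun m => φ (h0 v :: m))
    have e2 := dl_map h1 (fun m => φ (h0 v :: h1 v :: m)) l
    simp only [pr, dl, pr_add, dl_add, List.map_cons] at e e2 ⊢
    rw [e, e2]
    linear_combination φ (h0 v :: l.map h1) * two0

variable (a : V → V) (e0 : V) (h : ℕ → ℕ → V → V) (N : ℕ)

/-- sum of prisms -/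
def T (k : ℕ) (φ : List V → ZMod 2) (l : List V) : ZMod 2 :=
  ∑ i ∈ Finset.range N, pr (h k i) (h k (i + 1)) φ l

/-- the chain of the `k`-th hemisphere, as a functional on cochains. -/
def C : ℕ → (List V → ZMod 2) → ZMod 2
  | 0, φ => φ [e0]
  | k + 1, φ => C k (fun l => T h N k φ l + T h N k φ (l.map a))

theorem T_add (k : ℕ) (φ ψ : List V → ZMod 2) (l : List V) :
    T h N k (fun m => φ m + ψ m) l = T h N k φ l + T h N k ψ l := by
  simp only [T, pr_add, Finset.sum_add_distrib]

theorem C_add (k : ℕ) (φ ψ : List V → ZMod 2) :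
    C a e0 h N k (fun m => φ m + ψ m) = C a e0 h N k φ + C a e0 h N k ψ := by
  induction k generalizing φ ψ with
  | zero => simp [C]
  | succ k ih =>
    simp only [C]
    rw [← ih]
    congr 1
    funext l
    simp only [T_add]; ring

theorem T_dl (k : ℕ) (φ : List V → ZMod 2) (l : List V) (hid : h k 0 = id) :
    T h N k (dl φ) l = φ (l.map (h k N)) + φ l + dl (T h N k φ) l := by
  have e : dl (T h N k φ) l = ∑ i ∈ Finset.range N, dl (pr (h k i) (h k (i + 1)) φ) l := by
    rw [← dl_sum]; rfl
  rw [e]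
  simp only [T, prism, Finset.sum_add_distrib]
  congr 1
  induction N with
  | zero => simp [hid]; linear_combination - φ l * two0
  | succ N ih =>
    have := ih (by rw [← dl_sum]; rfl)
    rw [Finset.sum_range_succ, Finset.sum_range_succ]
    linear_combination this + φ (l.map (h k N)) * two0

theorem C_dl (ha : ∀ x, a (a x) = x) (hid : ∀ k, h k 0 = id)
  (hN : ∀ k x, h k N (a x) = h k N x)
    (k : ℕ) (φ : List V → ZMod 2) :
    C a e0 h N (k + 1) (dl φ) = C a e0 h N k (fun l => φ l + φ (l.map a)) := by
  have haa : ∀ l : List V, (l.map a).map a = l := by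
    intro l; simp [Function.comp_def, ha]
  have hNN : ∀ k, ∀ l : List V, (l.map a).map (h k N) = l.map (h k N) := by
    intro k l; simp [Function.comp_def, hN]
  induction k generalizing φ with
  | zero =>
    simp only [C, T_dl h N 0 φ _ (hid 0), hNN]
    simp only [dl, List.map_cons, List.map_nil]
    linear_combination (φ [h 0 N e0] + T h N 0 φ []) * two0
  | succ k ih =>
    have key : (fun l => T h N (k+1) (dl φ) l + T h N (k+1) (dl φ) (l.map a)) =
        fun l => (φ l + φ (l.map a)) +
          dl (fun l => T h N (k+1) φ l + T h N (k+1) φ (l.map a)) l := by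
      funext l
      rw [dl_add, dl_map, T_dl h N _ φ _ (hid _), T_dl h N _ φ _ (hid _), hNN]
      linear_combination (φ (l.map (h (k+1) N))) * two0
    rw [C, key, C_add a e0 h N (k+1) (fun l => φ l + φ (l.map a)), ih]
    have : (fun l : List V => T h N (k + 1) φ l + T h N (k + 1) φ (l.map a) +
        (T h N (k + 1) φ (l.map a) + T h N (k + 1) φ ((l.map a).map a)))
        = fun _ => 0 := by
      funext l
      rw [haa]
      linear_combination (T h N (k + 1) φ l + T h N (k + 1) φ (l.map a)) * two0
    have hz := C_add a e0 h N k (fun _ => 0) (fun _ => 0)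
    simp only [add_zero] at hz
    rw [this]
    linear_combination - hz

/-- support condition -/
theorem C_zero (G : ℕ → List V → Prop) (h00 : G 0 [e0])
    (hG : ∀ k i l m, i < N → G k l → (∀ y ∈ m, ∃ x ∈ l, y = h k i x ∨ y = h k (i+1) x) →
      G (k+1) m)
    (hGa : ∀ k l, G k l → G k (l.map a))
    (k : ℕ) (φ : List V → ZMod 2) (hφ : ∀ l, G k l → φ l = 0) : C a e0 h N k φ = 0 := by
  induction k generalizing φ with
  | zero => exact hφ _ h00
  | succ k ih =>
    rw [C]
    apply ih
    have : ∀ l, G k l → T h N k φ l = 0 := by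
      intro l hl
      apply Finset.sum_eq_zero
      intro i hi
      apply pr_zero
      intro m hm
      exact hφ m (hG k i l m (Finset.mem_range.1 hi) hl hm)
    intro l hl
    rw [this l hl, this _ (hGa k l hl), add_zero]

/-- multiply by a function of the first vertex -/
def mulθ (θ : V → ZMod 2) (φ : List V → ZMod 2) : List V → ZMod 2
  | [] => 0
  | v :: l => θ v * φ (v :: l)

def W (θ : ℕ → V → ZMod 2) : ℕ → List V → ZMod 2
  | 0 => dl (fun l => if l = [] then 1 else 0)
  | k + 1 => dl (mulθ (θ k) (W θ k))

theorem dl_W (θ : ℕ → V → ZMod 2) (k : ℕ) (l : List V) : dl (W θ k) l = 0 := by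
  cases k <;> exact dl_dl _ _

theorem W_nil (θ : ℕ → V → ZMod 2) (k : ℕ) : W θ k [] = 0 := by
  cases k <;> rfl

theorem W_inv (θ : ℕ → V → ZMod 2) (S : Set V) (hS : ∀ x ∈ S, a x ∈ S)
    (hθ : ∀ k, ∀ x ∈ S, θ k (a x) = θ k x + 1) (k : ℕ) :
    ∀ l : List V, (∀ x ∈ l, x ∈ S) → W θ k (l.map a) = W θ k l := by
  induction k with
  | zero =>
    intro l _
    simp only [W]
    rw [← dl_map]
    simp
  | succ k ih =>
    intro l hl
    simp only [W]
    rw [← dl_map]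
    have := dl_congr S (fun m => mulθ (θ k) (W θ k) (m.map a))
      (fun m => mulθ (θ k) (W θ k) m + W θ k m) ?_ l hl
    · rw [this, dl_add, dl_W, add_zero]
    · intro m hm
      cases m with
      | nil => simp [mulθ, W_nil]
      | cons v m =>
        have := ih (v :: m) hm
        simp only [List.map_cons, mulθ] at this ⊢
        rw [this, hθ k v (hm v (by simp))]
        ring

theorem W_const (θ : ℕ → V → ZMod 2) (S : Set V) (j : ℕ) (c : ZMod 2)
    (hc : ∀ x ∈ S, θ j x = c) (k : ℕ) (hk : j < k) :
    ∀ l : List V, (∀ x ∈ l, x ∈ S) → W θ k l = 0 := by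
  induction k, hk using Nat.le_induction with
  | base =>
    intro l hl
    simp only [W]
    by_cases h0 : c = 0
    · rw [dl_congr S _ (fun _ => 0) _ l hl, dl_zero]
      intro m hm
      cases m with
      | nil => rfl
      | cons v m => simp [mulθ, hc v (hm v (by simp)), h0]
    · have h1 : c = 1 := by
        have : ∀ c : ZMod 2, ¬ c = 0 → c = 1 := by decide
        exact this c h0
      rw [dl_congr S _ (W θ j) _ l hl, dl_W]
      intro m hm
      cases m with
      | nil => simp [mulθ, W_nil]
      | cons v m => simp [mulθ, hc v (hm v (by simp)), h1]
  | succ k hk ih =>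
    intro l hl
    simp only [W]
    rw [dl_congr S _ (fun _ => 0) _ l hl, dl_zero]
    intro m hm
    cases m with
    | nil => rfl
    | cons v m => simp [mulθ, ih (v :: m) hm]

theorem C_W (ha : ∀ x, a (a x) = x) (hid : ∀ k, h k 0 = id)
  (hN : ∀ k x, h k N (a x) = h k N x)
    (G : ℕ → List V → Prop) (h00 : G 0 [e0])
    (hG : ∀ k i l m, i < N → G k l → (∀ y ∈ m, ∃ x ∈ l, y = h k i x ∨ y = h k (i+1) x) →
      G (k+1) m)
    (hGa : ∀ k l, G k l → G k (l.map a))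
    (θ : ℕ → V → ZMod 2) (S : Set V) (hS : ∀ x ∈ S, a x ∈ S)
    (hθ : ∀ k, ∀ x ∈ S, θ k (a x) = θ k x + 1) (n : ℕ)
    (hGS : ∀ k ≤ n, ∀ l, G k l → ∀ x ∈ l, x ∈ S) (k : ℕ) (hk : k ≤ n) :
    C a e0 h N k (W θ k) = 1 := by
  induction k with
  | zero => simp [C, W, dl]
  | succ k ih =>
    rw [← ih (by omega)]
    simp only [W]
    rw [C_dl a e0 h N ha hid hN]
    have e := C_zero a e0 h N G h00 hG hGa k
      (fun l => (mulθ (θ k) (W θ k) l + mulθ (θ k) (W θ k) (l.map a)) + W θ k l) ?_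
    · rw [C_add a e0 h N k (fun l => mulθ (θ k) (W θ k) l + mulθ (θ k) (W θ k) (l.map a))] at e
      linear_combination e - C a e0 h N k (W θ k) * two0
    · intro l hl
      have hlS := hGS k (by omega) l hl
      cases l with
      | nil => simp [mulθ, W_nil]
      | cons v m =>
        have := W_inv a θ S hS hθ k (v :: m) hlS
        simp only [List.map_cons, mulθ] at this ⊢
        rw [this, hθ k v (hlS v (by simp))]
        linear_combination (θ k v * W θ k (v :: m) + W θ k (v :: m)) * two0

end chain

/-- the cross-polytope sphere -/
def K (n : ℕ) : Set (Fin (n + 1) → ℝ) := {x | ∑ i, |x i| = 1}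

theorem K_compact (n : ℕ) : IsCompact (K n) := by
  apply Metric.isCompact_of_isClosed_isBounded
  · exact isClosed_eq (by fun_prop) continuous_const
  · refine (Metric.isBounded_closedBall (x := (0 : Fin (n+1) → ℝ)) (r := 1)).subset ?_
    intro x hx
    rw [mem_closedBall_zero_iff, pi_norm_le_iff_of_nonneg zero_le_one]
    intro i
    have hx' : ∑ i, |x i| = 1 := hx
    rw [← hx', Real.norm_eq_abs]
    exact Finset.single_le_sum (f := fun i => |x i|) (fun _ _ => abs_nonneg _) (Finset.mem_univ i)

theorem K_abs {n : ℕ} {x : Fin (n + 1) → ℝ} (hx : x ∈ K n) (i) : |x i| ≤ 1 := by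
  have hx' : ∑ i, |x i| = 1 := hx
  rw [← hx']
  exact Finset.single_le_sum (f := fun i => |x i|) (fun _ _ => abs_nonneg _) (Finset.mem_univ i)

/-- standard basis vectors indexed by naturals -/
def e (n k : ℕ) : Fin (n + 1) → ℝ := fun i => if (i : ℕ) = k then 1 else 0

noncomputable def hh (n N k i : ℕ) (x : Fin (n + 1) → ℝ) : Fin (n + 1) → ℝ :=
  fun j => (1 - (i : ℝ) / N) * x j + (i : ℝ) / N * e n (k + 1) j

theorem e_mem {n k : ℕ} (hk : k ≤ n) : e n k ∈ K n := by
  have : ∀ i : Fin (n+1), |e n k i| = if i = ⟨k, by omega⟩ then 1 else 0 := by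
    intro i
    simp only [e, Fin.ext_iff]
    split_ifs <;> simp
  simp only [K, Set.mem_ofPred_eq, this]
  simp

theorem hh_mem {n N k i : ℕ} (hk : k + 1 ≤ n) (hi : i ≤ N) {x : Fin (n + 1) → ℝ}
    (hx : x ∈ K n) (hx0 : ∀ j : Fin (n+1), k < (j : ℕ) → x j = 0) :
    hh n N k i x ∈ K n ∧ ∀ j : Fin (n+1), k + 1 < (j : ℕ) → hh n N k i x j = 0 := by
  have t0 : (0 : ℝ) ≤ (i : ℝ) / N := by positivity
  have t1 : (i : ℝ) / N ≤ 1 := div_le_one_of_le₀ (by exact_mod_cast hi) (by positivity)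
  constructor
  · have hE : ∑ j, |e n (k+1) j| = 1 := e_mem hk
    have hX : ∑ j, |x j| = 1 := hx
    have : ∀ j, |hh n N k i x j| = (1 - (i : ℝ) / N) * |x j| + (i : ℝ) / N * |e n (k+1) j| := by
      intro j
      by_cases hj : (j : ℕ) = k + 1
      · simp [hh, hx0 j (by omega), abs_mul, abs_of_nonneg t0]
      · simp [hh, e, hj, abs_mul, abs_of_nonneg (sub_nonneg.2 t1)]
    simp only [K, Set.mem_ofPred_eq, this, Finset.sum_add_distrib, ← Finset.mul_sum, hE, hX]
    ring
  · intro j hj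
    simp [hh, e, hx0 j (by omega), show (j : ℕ) ≠ k + 1 by omega]

theorem hh_dist {n N k i i' : ℕ} (hk : k + 1 ≤ n) (hi : i ≤ N) (hii : |(i : ℝ) - i'| ≤ 1)
    {x y : Fin (n + 1) → ℝ} (hy : y ∈ K n) {d : ℝ} (hd : ∀ j, |x j - y j| ≤ d) (j) :
    |hh n N k i x j - hh n N k i' y j| ≤ d + 2 / N := by
  have t0 : (0 : ℝ) ≤ (i : ℝ) / N := by positivity
  have t1 : (i : ℝ) / N ≤ 1 := div_le_one_of_le₀ (by exact_mod_cast hi) (by positivity)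
  have e1 : hh n N k i x j - hh n N k i' y j = (1 - (i : ℝ) / N) * (x j - y j) +
      (((i : ℝ) - i') / N) * (e n (k+1) j - y j) := by
    simp only [hh]; ring
  have e2 : |(1 - (i : ℝ) / N) * (x j - y j)| ≤ d := by
    rw [abs_mul, abs_of_nonneg (sub_nonneg.2 t1)]
    have := hd j
    nlinarith [abs_nonneg (x j - y j)]
  have e3 : |e n (k+1) j - y j| ≤ 2 := by
    have := K_abs hy j
    have := K_abs (e_mem hk) j
    have := abs_sub (e n (k+1) j) (y j)
    linarith
  have e4 : |(((i : ℝ) - i') / N) * (e n (k+1) j - y j)| ≤ 2 / N := by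
    rw [abs_mul, abs_div, Nat.abs_cast]
    calc |(i : ℝ) - i'| / N * |e n (k+1) j - y j| ≤ 1 / N * 2 := by gcongr
      _ = 2 / N := by ring
  rw [e1]
  exact (abs_add_le _ _).trans (add_le_add e2 e4)

/-- good lists -/
def Good (n N k : ℕ) (l : List (Fin (n + 1) → ℝ)) : Prop :=
  k ≤ n → (∀ x ∈ l, x ∈ K n ∧ ∀ j : Fin (n+1), k < (j : ℕ) → x j = 0) ∧
    ∀ x ∈ l, ∀ y ∈ l, ∀ j, |x j - y j| ≤ 2 * k / N

theorem core (n : ℕ) (g : (Fin (n + 1) → ℝ) → Fin n → ℝ) (hg : ContinuousOn g (K n))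
    (hodd : ∀ x, g (-x) = - g x) : ∃ x ∈ K n, g x = 0 := by
  classical
  by_contra! hne
  -- lower bound
  have hc : ∃ c > 0, ∀ x ∈ K n, c ≤ ‖g x‖ := by
    obtain ⟨x, hx, hmin⟩ := (K_compact n).exists_isMinOn ⟨_, e_mem (Nat.zero_le n)⟩ hg.norm
    exact ⟨‖g x‖, norm_pos_iff.2 (hne x hx), fun y hy => hmin hy⟩
  obtain ⟨c, hc0, hc⟩ := hc
  obtain ⟨ε, hε, hu⟩ := Metric.uniformContinuousOn_iff.1
    ((K_compact n).uniformContinuousOn_of_continuous hg) c hc0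
  obtain ⟨N, hN⟩ := exists_nat_gt (2 * n / ε)
  have hNpos : (0 : ℝ) < N := lt_of_le_of_lt (by positivity) hN
  have hNε : 2 * (n : ℝ) / N < ε := by
    rw [div_lt_iff₀ hε] at hN
    rw [div_lt_iff₀ hNpos]; linarith
  let r : (Fin (n + 1) → ℝ) → ZMod 2 := fun x => if 0 < toLex x then 1 else 0
  have hr : ∀ x, x ≠ 0 → r (-x) = r x + 1 := by
    intro x hx
    have hx' : toLex x ≠ 0 := fun h => hx (by simpa using congrArg ofLex h)
    have e1 : (0 < toLex (-x)) ↔ toLex x < 0 := by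
      rw [toLex_neg]; exact neg_pos
    simp only [r]
    rcases lt_or_gt_of_ne hx' with h | h
    · have h2 : ¬ (0 < toLex x) := not_lt.2 h.le
      rw [if_pos (e1.2 h), if_neg h2]; decide
    · have h2 : 0 < toLex x := h
      rw [if_neg (fun h' => lt_asymm h (e1.1 h')), if_pos h2]; decide
  let θ : ℕ → (Fin (n + 1) → ℝ) → ZMod 2 := fun j x =>
    if h : j < n then (if 0 < g x ⟨j, h⟩ then 1 else if g x ⟨j, h⟩ < 0 then 0 else r x) else r x
  have hKneg : ∀ x ∈ K n, -x ∈ K n := by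
    intro x hx; simpa [K] using hx
  have hK0 : ∀ x ∈ K n, x ≠ 0 := by
    rintro x hx rfl
    simp [K] at hx
  have hθ : ∀ k, ∀ x ∈ K n, θ k (-x) = θ k x + 1 := by
    intro k x hx
    have := hr x (hK0 x hx)
    simp only [θ, hodd, Pi.neg_apply, this]
    have h11 : (0 : ZMod 2) = 1 + 1 := by decide
    split_ifs <;> first | rfl | (exfalso; linarith) | exact h11 | simp
  have hG : ∀ k i l m, i < N → Good n N k l →
      (∀ y ∈ m, ∃ x ∈ l, y = hh n N k i x ∨ y = hh n N k (i+1) x) → Good n N (k+1) m := by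
    intro k i l m hi hl hm hk
    obtain ⟨l1, l2⟩ := hl (by omega)
    constructor
    · intro y hy
      obtain ⟨x, hx, rfl | rfl⟩ := hm y hy
      · exact hh_mem hk hi.le (l1 x hx).1 (l1 x hx).2
      · exact hh_mem hk hi (l1 x hx).1 (l1 x hx).2
    · intro y hy y' hy' j
      have E : 2 * ((k + 1 : ℕ) : ℝ) / N = 2 * k / N + 2 / N := by push_cast; ring
      rw [E]
      obtain ⟨x, hx, rfl | rfl⟩ := hm y hy <;> obtain ⟨x', hx', rfl | rfl⟩ := hm y' hy'
      · exact hh_dist hk (by omega) (by simp) (l1 x' hx').1 (l2 x hx x' hx') j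
      · exact hh_dist hk (by omega) (by simp) (l1 x' hx').1 (l2 x hx x' hx') j
      · exact hh_dist hk (by omega) (by simp) (l1 x' hx').1 (l2 x hx x' hx') j
      · exact hh_dist hk (by omega) (by simp) (l1 x' hx').1 (l2 x hx x' hx') j
  have hGa : ∀ k l, Good n N k l → Good n N k (l.map (fun x => -x)) := by
    intro k l hl hk
    obtain ⟨l1, l2⟩ := hl hk
    constructor
    · intro y hy
      obtain ⟨x, hx, rfl⟩ := List.mem_map.1 hy
      exact ⟨hKneg x (l1 x hx).1, fun j hj => by simp [(l1 x hx).2 j hj]⟩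
    · intro y hy y' hy' j
      obtain ⟨x, hx, rfl⟩ := List.mem_map.1 hy
      obtain ⟨x', hx', rfl⟩ := List.mem_map.1 hy'
      have := l2 x' hx' x hx j
      simpa [neg_add_eq_sub] using this
  have h00 : Good n N 0 [e n 0] := by
    intro _
    constructor
    · intro x hx
      rw [List.mem_singleton] at hx
      subst hx
      exact ⟨e_mem (Nat.zero_le n), fun j hj => if_neg (by omega)⟩
    · intro x hx y hy j
      rw [List.mem_singleton] at hx hy
      subst hx; subst hy
      simp
  have one := C_W (fun x => -x) (e n 0) (hh n N) N (fun x => neg_neg x)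
    (by intro k; funext x j; simp [hh])
    (by intro k x; funext j; simp [hh, hNpos.ne'])
    (Good n N) h00 hG hGa θ (K n) hKneg hθ n
    (fun k hk l hl x hx => ((hl hk).1 x hx).1) n le_rfl
  have zero := C_zero (fun x => -x) (e n 0) (hh n N) N (Good n N) h00 hG hGa n (W θ n) ?_
  · rw [zero] at one
    exact absurd one (by decide)
  · intro l hl
    obtain ⟨l1, l2⟩ := hl le_rfl
    cases l with
    | nil => exact W_nil _ _
    | cons v m =>
      have hv := (l1 v (by simp)).1
      have hj : ∃ j, c ≤ |g v j| := by
        by_contra! hcon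
        have := hc v hv
        have h2 : ‖g v‖ < c := (pi_norm_lt_iff hc0).2 hcon
        linarith
      obtain ⟨j, hj⟩ := hj
      have hclose : ∀ x ∈ v :: m, |g v j - g x j| < c := by
        intro x hx
        have h1 : dist v x < ε := by
          rw [dist_pi_lt_iff hε]
          intro i
          rw [Real.dist_eq]
          exact (l2 v (by simp) x hx i).trans_lt hNε
        have h2 := hu v hv x (l1 x hx).1 h1
        exact (dist_le_pi_dist (g v) (g x) j).trans_lt h2
      refine W_const θ {x | x ∈ v :: m} j (if 0 < g v j then 1 else 0) ?_ n j.2 _ (fun x hx => hx)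
      intro x hx
      have h3 := abs_lt.1 (hclose x hx)
      simp only [θ, j.2, dite_true, Fin.eta]
      by_cases hp : 0 < g v j
      · rw [abs_of_pos hp] at hj
        rw [if_pos hp, if_pos (by linarith)]
      · rw [abs_of_nonpos (not_lt.1 hp)] at hj
        rw [if_neg hp, if_neg (by linarith), if_pos (by linarith)]

end BU

theorem borsuk_ulam (n : ℕ)
    (f : EuclideanSpace ℝ (Fin (n + 1)) → EuclideanSpace ℝ (Fin n))
    (hf : ContinuousOn f (Metric.sphere (0 : EuclideanSpace ℝ (Fin (n + 1))) 1)) :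
    ∃ x ∈ Metric.sphere (0 : EuclideanSpace ℝ (Fin (n + 1))) 1, f x = f (-x) := by
  let p : (Fin (n + 1) → ℝ) → EuclideanSpace ℝ (Fin (n + 1)) :=
    fun x => ‖WithLp.toLp 2 x‖⁻¹ • WithLp.toLp 2 x
  have hne : ∀ x ∈ BU.K n, ‖(WithLp.toLp 2 x : EuclideanSpace ℝ (Fin (n + 1)))‖ ≠ 0 := by
    intro x hx h
    have h0 : x = 0 := by simpa using h
    subst h0
    simp [BU.K] at hx
  have hp : ∀ x ∈ BU.K n, p x ∈ Metric.sphere (0 : EuclideanSpace ℝ (Fin (n + 1))) 1 := by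
    intro x hx
    rw [mem_sphere_zero_iff_norm]
    simp only [p, norm_smul, norm_inv, norm_norm]
    exact inv_mul_cancel₀ (hne x hx)
  have hpn : ∀ x, p (-x) = - p x := by
    intro x
    simp [p]
  have hpc : ContinuousOn p (BU.K n) := by
    have hc : Continuous fun x : Fin (n + 1) → ℝ =>
      (WithLp.toLp 2 x : EuclideanSpace ℝ (Fin (n + 1))) := by fun_prop
    exact (hc.norm.continuousOn.inv₀ hne).smul hc.continuousOn
  have h1 : ContinuousOn (fun x => f (p x)) (BU.K n) := hf.comp hpc hp
  have h2 : ContinuousOn (fun x => f (-p x)) (BU.K n) :=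
    hf.comp hpc.neg (fun x hx => by simpa using hp x hx)
  obtain ⟨x, hx, h0⟩ := BU.core n (fun x => WithLp.ofLp (f (p x) - f (-p x)))
    ((PiLp.continuous_ofLp 2 _).comp_continuousOn (h1.sub h2))
    (by intro x; simp [hpn])
  refine ⟨p x, hp x hx, ?_⟩
  have : f (p x) - f (-p x) = 0 := by
    ext i
    exact congrFun h0 i
  exact sub_eq_zero.1 this
end

section
/- Let A_i ⊆ R^n (i = 1,...,n) be compact strictly convex sets with nonempty interior, and suppose each f_i: R^n × S^n → R is continuous and antipodal in u (f_i(x, −u) = −f_i(x, u)). Then there exists u ∈ S^n such that for each i, either (i) both A_i ∩ H_u^+ and A_i ∩ H_u^− are nonempty and max_{x ∈ A_i ∩ H_u^+} f_i(x,u) − min_{x ∈ A_i ∩ H_u^+} f_i(x,u) = max_{x ∈ A_i ∩ H_u^−} f_i(x,u) − min_{x ∈ A_i ∩ H_u^−} f_i(x,u), or (ii) one of A_i ∩ H_u^+ and A_i ∩ H_u^− is empty, the other equals A_i, and f_i(·, u) is constant on A_i. -/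
/-- The closed upper half-space `H_u^+`. -/
def Hplus (n : ℕ) (u : EuclideanSpace ℝ (Fin (n + 1))) : Set (EuclideanSpace ℝ (Fin n)) :=
  {x | (∑ i : Fin n, u (Fin.castSucc i) * x i) ≥ u (Fin.last n)}

/-- The closed lower half-space `H_u^-`. -/
def Hminus (n : ℕ) (u : EuclideanSpace ℝ (Fin (n + 1))) : Set (EuclideanSpace ℝ (Fin n)) :=
  {x | (∑ i : Fin n, u (Fin.castSucc i) * x i) ≤ u (Fin.last n)}


namespace BU

/-- mod 2 chains on lists -/
abbrev Ch (V : Type*) := List V →₀ ZMod 2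

noncomputable section

variable {V W : Type*}

/-- cone -/
def cone (v : V) : Ch V →ₗ[ZMod 2] Ch V := Finsupp.lmapDomain (ZMod 2) (ZMod 2) (List.cons v)

/-- boundary of a list -/
def bd0 : List V → Ch V
  | [] => 0
  | v :: l => Finsupp.single l 1 + cone v (bd0 l)

/-- boundary -/
def bd : Ch V →ₗ[ZMod 2] Ch V := Finsupp.linearCombination (ZMod 2) bd0

/-- push forward -/
def push (g : V → W) : Ch V →ₗ[ZMod 2] Ch W :=
  Finsupp.lmapDomain (ZMod 2) (ZMod 2) (List.map g)

lemma cone_single (v : V) (l : List V) : cone v (Finsupp.single l 1) = Finsupp.single (v :: l) 1 := by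
  simp [cone]

lemma bd_single (l : List V) : bd (Finsupp.single l 1) = bd0 l := by
  simp [bd]

lemma push_single (g : V → W) (l : List V) :
    push g (Finsupp.single l 1) = Finsupp.single (l.map g) 1 := by
  simp [push]

/-- linear maps agreeing on lists are equal -/
lemma lin_ext {M : Type*} [AddCommMonoid M] [Module (ZMod 2) M] {F G : Ch V →ₗ[ZMod 2] M}
    (h : ∀ l, F (Finsupp.single l 1) = G (Finsupp.single l 1)) : F = G := by
  apply Finsupp.lhom_ext'
  intro l
  ext
  simpa using h l

lemma bd_cone (v : V) (c : Ch V) : bd (cone v c) = c + cone v (bd c) := by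
  have : bd ∘ₗ cone v = LinearMap.id + cone v ∘ₗ bd := by
    apply lin_ext
    intro l
    simp [cone_single, bd_single, bd0]
  exact LinearMap.congr_fun this c

lemma add_self (c : Ch V) : c + c = 0 := by
  ext l
  simp [CharTwo.add_self_eq_zero]

lemma bd_bd0 (l : List V) : bd (bd0 l) = 0 := by
  induction l with
  | nil => simp [bd0]
  | cons v l ih =>
    simp [bd0, bd_cone, bd_single, ih, add_self]

lemma bd_bd (c : Ch V) : bd (bd c) = 0 := by
  have : (bd ∘ₗ bd : Ch V →ₗ[ZMod 2] Ch V) = 0 := by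
    apply lin_ext
    intro l
    simp [bd_single, bd_bd0]
  exact LinearMap.congr_fun this c

lemma push_cone (g : V → W) (v : V) (c : Ch V) : push g (cone v c) = cone (g v) (push g c) := by
  have : push g ∘ₗ cone v = cone (g v) ∘ₗ push g := by
    apply lin_ext
    intro l
    simp [cone_single, push_single]
  exact LinearMap.congr_fun this c

lemma push_bd (g : V → W) (c : Ch V) : push g (bd c) = bd (push g c) := by
  have : push g ∘ₗ bd = bd ∘ₗ push g := by
    apply lin_ext
    intro l
    simp only [LinearMap.comp_apply, bd_single, push_single]
    induction l with
    | nil => simp [bd0]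
    | cons v l ih => simp [bd0, push_cone, push_single, ih]
  exact LinearMap.congr_fun this c

/-- chains supported on lists with a property -/
abbrev Sup (P : List V → Prop) : Submodule (ZMod 2) (Ch V) :=
  Finsupp.supported (ZMod 2) (ZMod 2) {l | P l}

lemma sup_map {M : Type*} [AddCommMonoid M] [Module (ZMod 2) M] {P : List V → Prop}
    {N : Submodule (ZMod 2) M} (F : Ch V →ₗ[ZMod 2] M)
    (h : ∀ l, P l → F (Finsupp.single l 1) ∈ N) {c : Ch V} (hc : c ∈ Sup P) : F c ∈ N := by
  have : Sup P ≤ N.comap F := by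
    rw [Sup, Finsupp.supported_eq_span_single, Submodule.span_le]
    rintro _ ⟨l, hl, rfl⟩
    exact h l hl
  exact this hc

lemma sup_eq {M : Type*} [AddCommGroup M] [Module (ZMod 2) M] {P : List V → Prop}
    (F G : Ch V →ₗ[ZMod 2] M)
    (h : ∀ l, P l → F (Finsupp.single l 1) = G (Finsupp.single l 1)) {c : Ch V} (hc : c ∈ Sup P) :
    F c = G c := by
  have := sup_map (N := LinearMap.eqLocus F G) LinearMap.id (P := P) (fun l hl => h l hl) hc
  exact this

lemma single_sup {P : List V → Prop} {l : List V} (h : P l) : Finsupp.single l 1 ∈ Sup P :=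
  Finsupp.single_mem_supported _ _ h

lemma sup_mono {P Q : List V → Prop} (h : ∀ l, P l → Q l) {c : Ch V} (hc : c ∈ Sup P) :
    c ∈ Sup Q := Finsupp.supported_mono (fun l hl => h l hl) hc

lemma cone_sup {P Q : List V → Prop} (v : V) (h : ∀ l, P l → Q (v :: l)) {c : Ch V}
    (hc : c ∈ Sup P) : cone v c ∈ Sup Q :=
  sup_map (cone v) (fun l hl => by rw [cone_single]; exact single_sup (h l hl)) hc

lemma push_sup {P : List V → Prop} {Q : List W → Prop} (g : V → W) (h : ∀ l, P l → Q (l.map g))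
    {c : Ch V} (hc : c ∈ Sup P) : push g c ∈ Sup Q :=
  sup_map (push g) (fun l hl => by rw [push_single]; exact single_sup (h l hl)) hc

/-- facets of a list are sublists of length one less -/
lemma bd0_sup (l : List V) : bd0 l ∈ Sup (fun l' : List V => l'.Sublist l ∧ l'.length + 1 = l.length) := by
  induction l with
  | nil => simp [bd0]
  | cons v l ih =>
    refine Submodule.add_mem _ (single_sup ?_) (cone_sup v ?_ ih)
    · simp
    · rintro l' ⟨h1, h2⟩
      exact ⟨h1.cons_cons v, by simp [h2]⟩

/-! ### subdivision -/

/-- subdivision with respect to a barycenter function -/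
def sd (b : List V → V) : ℕ → Ch V →ₗ[ZMod 2] Ch V
  | 0 => LinearMap.id
  | k + 1 => Finsupp.linearCombination (ZMod 2) (fun l => cone (b l) (sd b k (bd0 l)))

lemma sd_succ_single (b : List V → V) (k : ℕ) (l : List V) :
    sd b (k + 1) (Finsupp.single l 1) = cone (b l) (sd b k (bd0 l)) := by
  simp [sd]

/-- chains of lists of length k -/
abbrev Len (k : ℕ) : Submodule (ZMod 2) (Ch V) := Sup (fun l : List V => l.length = k)

lemma bd_len {k : ℕ} {c : Ch V} (hc : c ∈ Len (k + 1)) : bd c ∈ Len k := by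
  refine sup_map bd ?_ hc
  intro l hl
  rw [bd_single]
  refine sup_mono ?_ (bd0_sup l)
  rintro l' ⟨_, h⟩
  omega

lemma bd0_len {k : ℕ} {l : List V} (h : l.length = k + 1) : bd0 l ∈ Len k := by
  rw [← bd_single]; exact bd_len (single_sup h)

lemma bd_sd (b : List V → V) (k : ℕ) {c : Ch V} (hc : c ∈ Len (k + 1)) :
    bd (sd b (k + 1) c) = sd b k (bd c) := by
  induction k generalizing c with
  | zero =>
    refine sup_eq (bd ∘ₗ sd b 1) (sd b 0 ∘ₗ bd) ?_ hc
    intro l hl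
    simp only [LinearMap.comp_apply, sd_succ_single, bd_cone, bd_single]
    simp [sd, bd_bd0]
  | succ k ih =>
    refine sup_eq (bd ∘ₗ sd b (k + 2)) (sd b (k + 1) ∘ₗ bd) ?_ hc
    intro l hl
    simp only [LinearMap.comp_apply, sd_succ_single b (k + 1), bd_cone, bd_single]
    rw [ih (bd0_len hl), bd_bd0]
    simp

lemma push_sd (g : V → V) (b : List V → V) (hb : ∀ l, b (l.map g) = g (b l)) (k : ℕ) (c : Ch V) :
    push g (sd b k c) = sd b k (push g c) := by
  induction k generalizing c with
  | zero => simp [sd]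
  | succ k ih =>
    have : push g ∘ₗ sd b (k + 1) = sd b (k + 1) ∘ₗ push g := by
      apply lin_ext
      intro l
      simp only [LinearMap.comp_apply, sd_succ_single, push_single, push_cone, ih, hb]
      rw [← bd_single, push_bd, push_single, bd_single]
    exact LinearMap.congr_fun this c

lemma sd_len (b : List V → V) (k : ℕ) {c : Ch V} (hc : c ∈ Len k) : sd b k c ∈ Len k := by
  induction k generalizing c with
  | zero => simpa [sd] using hc
  | succ k ih =>
    refine sup_map (sd b (k + 1)) ?_ hc
    intro l hl
    rw [sd_succ_single]
    exact cone_sup (P := fun l : List V => l.length = k) _ (by simp) (ih (bd0_len hl))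

/-! ### the hemispheres -/

/-- octahedral hemispheres -/
def oct (neg : V → V) (e : ℕ → V) : ℕ → Ch V
  | 0 => Finsupp.single [e 0] 1
  | k + 1 => cone (e (k + 1)) (oct neg e k + push neg (oct neg e k))

lemma push_push (g : V → V) (hg : ∀ v, g (g v) = v) (c : Ch V) : push g (push g c) = c := by
  have : push g ∘ₗ push g = LinearMap.id := by
    apply lin_ext
    intro l
    have : g ∘ g = id := funext hg
    simp [push_single, this]
  exact LinearMap.congr_fun this c

lemma bd_oct (neg : V → V) (hneg : ∀ v, neg (neg v) = v) (e : ℕ → V) (k : ℕ) :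
    bd (oct neg e (k + 1)) = oct neg e k + push neg (oct neg e k) := by
  induction k with
  | zero =>
    simp only [oct, bd_cone, map_add, bd_single, push_single, bd0, List.map_cons, List.map_nil,
      map_zero, add_zero]
    have : ∀ a b c : Ch V, a + b + (c + b) = a + c := fun a b c => by
      rw [add_add_add_comm, add_self, add_zero]
    exact this _ _ _
  | succ k ih =>
    rw [oct, bd_cone, map_add, ← push_bd, ih, map_add (push neg), push_push _ hneg]
    have : ∀ a b : Ch V, a + b + (b + a) = 0 := fun a b => by
      rw [add_comm b a]; exact add_self _
    rw [this]; simp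

lemma oct_len (neg : V → V) (e : ℕ → V) (k : ℕ) : oct neg e k ∈ Len (k + 1) := by
  induction k with
  | zero => exact single_sup (by simp)
  | succ k ih =>
    refine cone_sup (P := fun l : List V => l.length = k + 1) _ (by simp) ?_
    exact Submodule.add_mem _ ih (push_sup _ (by simp) ih)

/-- subdivided hemispheres -/
def hem (neg : V → V) (e : ℕ → V) (b : List V → V) (j : ℕ) (k : ℕ) : Ch V :=
  (sd b (k + 1))^[j] (oct neg e k)

lemma hem_len (neg : V → V) (e : ℕ → V) (b : List V → V) (j k : ℕ) :
    hem neg e b j k ∈ Len (k + 1) := by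
  induction j with
  | zero => exact oct_len neg e k
  | succ j ih =>
    rw [hem, Function.iterate_succ_apply']
    exact sd_len b _ ih

lemma bd_hem (neg : V → V) (hneg : ∀ v, neg (neg v) = v) (e : ℕ → V) (b : List V → V)
    (hb : ∀ l, b (l.map neg) = neg (b l)) (j k : ℕ) :
    bd (hem neg e b j (k + 1)) = hem neg e b j k + push neg (hem neg e b j k) := by
  induction j with
  | zero => exact bd_oct neg hneg e k
  | succ j ih =>
    have h1 : ∀ k, hem neg e b (j + 1) k = sd b (k + 1) (hem neg e b j k) := fun k => by
      rw [hem, Function.iterate_succ_apply']; rfl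
    rw [h1, h1, bd_sd _ _ (hem_len _ _ _ _ _), ih, map_add, push_sd _ _ hb]

lemma bd_hem_zero (neg : V → V) (e : ℕ → V) (b : List V → V) (j : ℕ) :
    bd (hem neg e b j 0) = Finsupp.single [] 1 := by
  induction j with
  | zero => simp [hem, oct, bd_single, bd0]
  | succ j ih =>
    have h1 : hem neg e b (j + 1) 0 = sd b (0 + 1) (hem neg e b j 0) := by
      rw [hem, Function.iterate_succ_apply']; rfl
    rw [h1, bd_sd _ _ (hem_len _ _ _ _ _), ih]; rfl

/-! ### alternating functional -/

/-- alternating sign pattern -/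
def alt : Bool → List Bool → ZMod 2
  | _, [] => 1
  | b, c :: s => if c = b then alt (!b) s else 0

/-- coboundary of a functional -/
def cob : (List W → ZMod 2) → List W → ZMod 2
  | _, [] => 0
  | A, v :: l => A l + cob (fun l' => A (v :: l')) l

lemma cob_zero (l : List W) : cob (fun _ => 0) l = 0 := by
  induction l with
  | nil => rfl
  | cons v l ih => simp [cob, ih]

lemma cob_eq (A : List W → ZMod 2) (l : List W) :
    Finsupp.linearCombination (ZMod 2) A (bd0 l) = cob A l := by
  induction l generalizing A with
  | nil => simp [bd0, cob]
  | cons v l ih =>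
    rw [bd0, map_add, cob, ← ih]
    simp [cone, Finsupp.linearCombination_mapDomain, Function.comp_def]

lemma cob_alt (b : Bool) (s : List Bool) : cob (alt b) s = alt true s + alt false s := by
  induction s generalizing b with
  | nil => simp [cob, alt, CharTwo.add_self_eq_zero]
  | cons c s ih =>
    rw [cob]
    by_cases h : c = b
    · subst h
      have : (fun l' => alt c (c :: l')) = alt (!c) := by funext l'; simp [alt]
      rw [this, ih]
      have h2 : ∀ a b : ZMod 2, a + (a + b) = b := by decide
      have h3 : ∀ a b : ZMod 2, a + (b + a) = b := by decide
      cases c <;> simp [alt, h2, h3]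
    · have : (fun l' => alt b (c :: l')) = fun _ => 0 := by funext l'; simp [alt, h]
      rw [this, cob_zero]
      cases c <;> cases b <;> simp_all [alt]

lemma cob_perm {l l' : List W} (h : l.Perm l') (A : List W → ZMod 2)
    (hA : ∀ l l', l.Perm l' → A l = A l') : cob A l = cob A l' := by
  induction h generalizing A with
  | nil => rfl
  | cons x h ih =>
    rw [cob, cob, hA _ _ h, ih]
    intro l l' h
    exact hA _ _ (h.cons x)
  | swap x y l =>
    simp only [cob]
    have : (fun l' => A (y :: x :: l')) = (fun l' => A (x :: y :: l')) := by
      funext l'; exact hA _ _ (List.Perm.swap _ _ _)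
    rw [this]; ring
  | trans h1 h2 ih1 ih2 => rw [ih1 A hA, ih2 A hA]

lemma cob_congr (A B : List W → ZMod 2) (l : List W) (h : ∀ l', l'.Sublist l → A l' = B l') :
    cob A l = cob B l := by
  induction l generalizing A B with
  | nil => rfl
  | cons v l ih =>
    rw [cob, cob, h l (by simp), ih]
    intro l' hl'
    exact h _ (hl'.cons_cons v)

lemma cob_map {U : Type*} (g : W → U) (A : List U → ZMod 2) (l : List W) :
    cob (fun l => A (l.map g)) l = cob A (l.map g) := by
  induction l generalizing A with
  | nil => rfl
  | cons v l ih =>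
    simp only [cob, List.map_cons]
    rw [← ih]

/-- labels -/
abbrev Lab (n : ℕ) := Fin n ×ₗ Bool

/-- sorting labels -/
def srt {n : ℕ} (L : List (Lab n)) : List (Lab n) := L.insertionSort (· ≤ ·)

/-- sign of label -/
def sg {n : ℕ} (x : Lab n) : Bool := (ofLex x).2
/-- index of label -/
def ix {n : ℕ} (x : Lab n) : Fin n := (ofLex x).1
/-- flipped label -/
def flp {n : ℕ} (x : Lab n) : Lab n := toLex (ix x, !sg x)

/-- alternating functional on label lists -/
def al {n : ℕ} (b : Bool) (L : List (Lab n)) : ZMod 2 := alt b ((srt L).map sg)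

lemma srt_perm {n : ℕ} (L : List (Lab n)) : (srt L).Perm L := List.perm_insertionSort _ _

lemma srt_sorted {n : ℕ} (L : List (Lab n)) : (srt L).Pairwise (· ≤ ·) :=
  List.pairwise_insertionSort _ _

lemma srt_unique {n : ℕ} {L M : List (Lab n)} (h : M.Perm L) (hM : M.Pairwise (· ≤ ·)) :
    srt L = M :=
  List.Perm.eq_of_pairwise (fun _ _ _ _ h1 h2 => le_antisymm h1 h2) (srt_sorted L) hM
    ((srt_perm L).trans h.symm)

lemma al_perm {n : ℕ} (b : Bool) (L M : List (Lab n)) (h : L.Perm M) : al b L = al b M := by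
  unfold al
  rw [srt_unique (L := L) ((srt_perm M).trans h.symm) (srt_sorted M)]

lemma cob_al {n : ℕ} (b : Bool) (L : List (Lab n)) : cob (al b) L = al true L + al false L := by
  rw [cob_perm (srt_perm L).symm (al b) (al_perm b),
    cob_congr (al b) (fun l => alt b (l.map sg)), cob_map, cob_alt]
  · rfl
  · intro l' hl'
    unfold al
    rw [srt_unique (List.Perm.refl l') ((srt_sorted L).sublist hl')]

/-- no complementary pairs -/
def NC {n : ℕ} (L : List (Lab n)) : Prop := ∀ x ∈ L, ∀ y ∈ L, ix x = ix y → sg x = sg y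

lemma alt_flip (b : Bool) (s : List Bool) : alt b (s.map not) = alt (!b) s := by
  induction s generalizing b with
  | nil => rfl
  | cons c s ih => simp only [List.map_cons, alt, ih]; cases b <;> cases c <;> simp

lemma al_flip {n : ℕ} (b : Bool) (L : List (Lab n)) (h : NC L) :
    al b (L.map flp) = al (!b) L := by
  unfold al
  rw [srt_unique (M := (srt L).map flp) ((srt_perm L).map _), ← alt_flip, List.map_map, List.map_map]
  · rfl
  · rw [List.pairwise_map]
    refine List.Pairwise.imp_of_mem ?_ (srt_sorted L)
    intro x y hx hy hxy
    have hx := (srt_perm L).mem_iff.1 hx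
    have hy := (srt_perm L).mem_iff.1 hy
    have h1 := h x hx y hy
    rw [Prod.Lex.le_iff] at hxy ⊢
    rcases hxy with h | h
    · left; exact h
    · right
      refine ⟨h.1, ?_⟩
      have := h1 h.1
      simp [flp, this]

lemma alt_chain (b : Bool) (s : List Bool) (h : alt b s ≠ 0) : s.IsChain (· ≠ ·) := by
  induction s generalizing b with
  | nil => simp
  | cons c s ih =>
    rw [alt] at h
    split_ifs at h with hc
    · have h1 := ih _ h
      cases s with
      | nil => simp
      | cons d s =>
        rw [List.isChain_cons_cons]
        refine ⟨?_, h1⟩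
        rw [alt] at h
        split_ifs at h with hd
        · subst hc; subst hd; simp
        · simp at h
    · simp at h

lemma al_top {n : ℕ} (b : Bool) (L : List (Lab n)) (h : NC L) (hL : L.length = n + 1) :
    al b L = 0 := by
  by_contra hne
  have h1 := alt_chain _ _ hne
  rw [List.isChain_map] at h1
  have h2 : (srt L).IsChain (fun x y => ix x < ix y) := by
    have h3 := (srt_sorted L).isChain
    have h4 : ∀ x ∈ srt L, ∀ y ∈ srt L, ix x = ix y → sg x = sg y := by
      intro x hx y hy
      exact h x ((srt_perm L).mem_iff.1 hx) y ((srt_perm L).mem_iff.1 hy)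
    generalize srt L = M at h1 h3 h4
    induction M with
    | nil => simp
    | cons x M ih =>
      cases M with
      | nil => simp
      | cons y M =>
        rw [List.isChain_cons_cons] at h1 h3 ⊢
        refine ⟨?_, ih h1.2 h3.2 fun x hx y hy => h4 x (by simp [hx]) y (by simp [hy])⟩
        have h5 := h3.1
        rw [Prod.Lex.le_iff] at h5
        rcases h5 with h5 | h5
        · exact h5
        · exact absurd (h4 x (by simp) y (by simp) h5.1) h1.1
  have h3 : ((srt L).map ix).IsChain (· < ·) := by rw [List.isChain_map]; exact h2
  have h4 : ((srt L).map ix).Nodup := (List.isChain_iff_pairwise.1 h3).imp (fun h => ne_of_lt h)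
  have h5 := h4.length_le_card
  rw [List.length_map, (srt_perm L).length_eq, hL] at h5
  simp at h5

/-- Tucker-type lemma -/
lemma tucker {n : ℕ} (neg : V → V) (hneg : ∀ v, neg (neg v) = v) (e : ℕ → V) (b : List V → V)
    (hb : ∀ l, b (l.map neg) = neg (b l)) (j : ℕ) (lam : V → Lab n)
    (hsup : ∀ k ≤ n, hem neg e b j k ∈ Sup (fun l : List V =>
      (∀ v ∈ l, lam (neg v) = flp (lam v)) ∧ NC (l.map lam))) : False := by
  let Phi : Bool → Ch V →ₗ[ZMod 2] ZMod 2 :=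
    fun t => Finsupp.linearCombination (ZMod 2) (fun l => al t (l.map lam))
  have hbd : ∀ c : Ch V, Phi true (bd c) = Phi true c + Phi false c := by
    intro c
    have : Phi true ∘ₗ bd = Phi true + Phi false := by
      apply lin_ext
      intro l
      simp only [LinearMap.comp_apply, bd_single, Phi, cob_eq, LinearMap.add_apply,
        Finsupp.linearCombination_single, one_smul]
      rw [cob_map, cob_al]
    exact LinearMap.congr_fun this c
  have key : ∀ k ≤ n, Phi true (hem neg e b j k) + Phi false (hem neg e b j k) = 1 := by
    intro k
    induction k with
    | zero =>
      intro _
      rw [← hbd, bd_hem_zero]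
      simp [Phi, al, srt, alt]
    | succ k ih =>
      intro hk
      rw [← hbd, bd_hem _ hneg _ _ hb, map_add, ← ih (by omega)]
      congr 1
      refine sup_eq (Phi true ∘ₗ push neg) (Phi false) ?_ (hsup k (by omega))
      rintro l ⟨h1, h2⟩
      simp only [LinearMap.comp_apply, push_single, Phi, Finsupp.linearCombination_single, one_smul]
      have := al_flip true _ h2
      rw [show (!true) = false from rfl] at this
      rw [← this, List.map_map, List.map_map]
      congr 1
      apply List.map_congr_left
      intro v hv
      exact h1 v hv
  have htop : ∀ t, Phi t (hem neg e b j n) = 0 := by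
    intro t
    have hc : hem neg e b j n ∈ Sup (fun l : List V => NC (l.map lam) ∧ l.length = n + 1) := by
      intro l hl
      exact ⟨(hsup n le_rfl hl).2, hem_len neg e b j n hl⟩
    refine sup_eq (Phi t) 0 ?_ hc
    rintro l ⟨h1, h2⟩
    simp only [Phi, Finsupp.linearCombination_single, one_smul, LinearMap.zero_apply]
    exact al_top _ _ h1 (by simpa using h2)
  have := key n le_rfl
  rw [htop, htop] at this
  simp at this

/-! ### mesh -/

/-- barycenter -/
def bar {E : Type*} [NormedAddCommGroup E] [NormedSpace ℝ E] (l : List E) : E :=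
  (l.length : ℝ)⁻¹ • l.sum

/-- small lists in a set -/
def PS {E : Type*} [NormedAddCommGroup E] (S : Set E) (d : ℝ) (l : List E) : Prop :=
  (∀ v ∈ l, v ∈ S) ∧ ∀ v ∈ l, ∀ w ∈ l, dist v w ≤ d

section mesh

variable {E : Type*} [NormedAddCommGroup E] [NormedSpace ℝ E]

lemma bar_neg (l : List E) : bar (l.map (fun x => -x)) = -bar l := by
  have : (l.map (fun x => -x)).sum = - l.sum := by
    induction l with
    | nil => simp
    | cons v l ih => simp [ih]; abel
  simp [bar, this]

lemma sum_dist (v : E) (d : ℝ) (l : List E) (h : ∀ w ∈ l, dist w v ≤ d) :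
    ‖l.sum - (l.length : ℝ) • v‖ ≤ l.length * d := by
  induction l with
  | nil => simp
  | cons w l ih =>
    have h1 := ih fun w hw => h w (by simp [hw])
    have h2 := h w (by simp)
    rw [dist_eq_norm] at h2
    have : (w :: l).sum - ((w :: l).length : ℝ) • v = (w - v) + (l.sum - (l.length : ℝ) • v) := by
      simp [add_smul]; abel
    rw [this]
    refine (norm_add_le _ _).trans ?_
    simp only [List.length_cons, Nat.cast_add, Nat.cast_one]
    linarith

lemma bar_dist {r d : ℝ} (l : List E) (v : E) (hv : v ∈ l) (hd : 0 ≤ d)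
    (hr : (l.length : ℝ) - 1 ≤ r * l.length) (h : ∀ w ∈ l, dist w v ≤ d) :
    dist (bar l) v ≤ r * d := by
  classical
  have hp := List.perm_cons_erase hv
  have h1 := sum_dist v d (l.erase v) fun w hw => h w (List.mem_of_mem_erase hw)
  have hlen : l.length = (l.erase v).length + 1 := by rw [hp.length_eq]; simp
  have hsum : l.sum = v + (l.erase v).sum := by rw [hp.sum_eq]; simp
  have hpos : (0 : ℝ) < l.length := by rw [hlen]; positivity
  have h2 : bar l - v = (l.length : ℝ)⁻¹ • ((l.erase v).sum - ((l.erase v).length : ℝ) • v) := by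
    rw [bar, hsum]
    have h3 : (l.length : ℝ)⁻¹ • ((l.length : ℝ) • v) = v := by
      rw [smul_smul, inv_mul_cancel₀ hpos.ne', one_smul]
    have h4 : (l.length : ℝ) • v = ((l.erase v).length : ℝ) • v + v := by
      rw [hlen]; push_cast; rw [add_smul, one_smul]
    calc _ = (l.length : ℝ)⁻¹ • (v + (l.erase v).sum) - (l.length : ℝ)⁻¹ • ((l.length : ℝ) • v) := by
          rw [h3]
      _ = _ := by
          rw [← smul_sub, h4]
          congr 1
          abel
  rw [dist_eq_norm, h2, norm_smul, norm_inv, Real.norm_of_nonneg hpos.le, inv_mul_le_iff₀ hpos]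
  refine h1.trans ?_
  have : ((l.erase v).length : ℝ) = l.length - 1 := by rw [hlen]; simp
  rw [this]
  nlinarith

lemma bar_mem (l : List E) (hl : l ≠ []) {S : Set E} (hS : Convex ℝ S) (h : ∀ v ∈ l, v ∈ S) :
    bar l ∈ S := by
  induction l with
  | nil => exact absurd rfl hl
  | cons v l ih =>
    by_cases h0 : l = []
    · subst h0
      simpa [bar] using h
    · have h1 := ih h0 fun w hw => h w (by simp [hw])
      have h2 := h v (by simp)
      have hpos : (0 : ℝ) < l.length := by
        have := List.length_pos_iff.2 h0
        exact_mod_cast this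
      have h3 := hS h2 h1 (a := ((l.length : ℝ) + 1)⁻¹) (b := ((l.length : ℝ) + 1)⁻¹ * l.length)
        (by positivity) (by positivity) (by field_simp; ring)
      convert h3 using 1
      simp only [bar, List.length_cons, List.sum_cons, Nat.cast_add, Nat.cast_one, smul_add]
      congr 1
      rw [smul_smul, mul_assoc, mul_inv_cancel₀ hpos.ne', mul_one]

lemma sd_mesh {m : ℕ} {r d : ℝ} (hr0 : 0 ≤ r) (hd : 0 ≤ d)
    (hr : ∀ k : ℕ, k ≤ m → (k : ℝ) - 1 ≤ r * k) (k : ℕ) (hk : k ≤ m) {S : Set E}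
    (hS : Convex ℝ S) {c : Ch E} (hc : c ∈ Sup (fun l : List E => PS S d l ∧ l.length = k)) :
    sd bar k c ∈ Sup (PS S (r * d)) := by
  induction k generalizing S c with
  | zero =>
    refine sup_map (sd bar 0) ?_ hc
    rintro l ⟨_, hl⟩
    rw [List.length_eq_zero_iff] at hl
    subst hl
    exact single_sup (P := PS S (r * d)) ⟨by simp, by simp⟩
  | succ k ih =>
    refine sup_map (sd bar (k + 1)) ?_ hc
    rintro l ⟨⟨h1, h2⟩, hl⟩
    rw [sd_succ_single]
    have hsub : convexHull ℝ {v | v ∈ l} ⊆ S := convexHull_min h1 hS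
    have hl0 : l ≠ [] := by rintro rfl; simp at hl
    have h3 : sd bar k (bd0 l) ∈ Sup (PS (convexHull ℝ {v | v ∈ l}) (r * d)) := by
      apply ih (by omega) (convex_convexHull _ _)
      refine sup_mono ?_ (bd0_sup l)
      rintro l' ⟨h4, h5⟩
      refine ⟨⟨fun v hv => subset_convexHull _ _ (h4.subset hv), fun v hv w hw =>
        h2 v (h4.subset hv) w (h4.subset hw)⟩, by omega⟩
    refine cone_sup _ ?_ h3
    rintro l' ⟨h4, h5⟩
    have hball : ∀ v ∈ l', dist v (bar l) ≤ r * d := by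
      intro v hv
      have : convexHull ℝ {v | v ∈ l} ⊆ Metric.closedBall (bar l) (r * d) := by
        apply convexHull_min _ (convex_closedBall _ _)
        intro w hw
        rw [Metric.mem_closedBall, dist_comm]
        apply bar_dist l w hw hd
        · rw [hl]; exact hr _ hk
        · intro x hx; exact h2 x hx w hw
      exact this (h4 v hv)
    constructor
    · intro v hv
      rcases List.mem_cons.1 hv with rfl | hv
      · exact bar_mem l hl0 hS h1
      · exact hsub (h4 v hv)
    · intro v hv w hw
      rcases List.mem_cons.1 hv with rfl | hv <;> rcases List.mem_cons.1 hw with rfl | hw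
      · rw [dist_self]; positivity
      · rw [dist_comm]; exact hball w hw
      · exact hball v hv
      · exact h5 v hv w hw

end mesh

/-! ### the octahedron -/

section octa

variable {n : ℕ}

/-- faces -/
def face (ε : Fin (n + 1) → ℝ) : Set (EuclideanSpace ℝ (Fin (n + 1))) :=
  {v | ‖v‖ ≤ 1 ∧ (∀ i, 0 ≤ ε i * v i) ∧ ∑ i, ε i * v i = 1}

lemma face_convex (ε : Fin (n + 1) → ℝ) : Convex ℝ (face ε) := by
  intro x hx y hy a b ha hb hab
  refine ⟨?_, ?_, ?_⟩
  · have := convex_closedBall (0 : EuclideanSpace ℝ (Fin (n + 1))) 1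
      (mem_closedBall_zero_iff.2 hx.1) (mem_closedBall_zero_iff.2 hy.1) ha hb hab
    exact mem_closedBall_zero_iff.1 this
  · intro i
    have h1 := hx.2.1 i
    have h2 := hy.2.1 i
    have : ε i * (a • x + b • y) i = a * (ε i * x i) + b * (ε i * y i) := by
      simp; ring
    rw [this]; positivity
  · have : ∀ i, ε i * (a • x + b • y) i = a * (ε i * x i) + b * (ε i * y i) := by
      intro i; simp; ring
    simp_rw [this]
    rw [Finset.sum_add_distrib, ← Finset.mul_sum, ← Finset.mul_sum, hx.2.2, hy.2.2]
    linarith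

/-- basis vectors -/
def ee (n : ℕ) (k : ℕ) : EuclideanSpace ℝ (Fin (n + 1)) :=
  EuclideanSpace.single (Fin.ofNat (n + 1) k) 1

lemma ee_apply {k : ℕ} (hk : k ≤ n) (i : Fin (n + 1)) : ee n k i = if (i : ℕ) = k then 1 else 0 := by
  have : i = Fin.ofNat (n + 1) k ↔ (i : ℕ) = k := by
    rw [Fin.ext_iff]; simp [Fin.ofNat, Nat.mod_eq_of_lt (Nat.lt_succ_of_le hk)]
  simp only [ee, PiLp.single_apply, this]

lemma ee_face {k : ℕ} (hk : k ≤ n) (ε : Fin (n + 1) → ℝ) (hε : ∀ i : Fin (n + 1), (i : ℕ) = k → ε i = 1) :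
    ee n k ∈ face ε := by
  refine ⟨by simp [ee], ?_, ?_⟩
  · intro i
    rw [ee_apply hk]
    split_ifs with h
    · simp [hε i h]
    · simp
  · rw [Finset.sum_eq_single (⟨k, by omega⟩ : Fin (n + 1))]
    · rw [ee_apply hk, hε _ rfl]; simp
    · intro i _ hi
      rw [ee_apply hk, if_neg]; simp
      intro h; exact hi (Fin.ext h)
    · simp

/-- property of octahedral lists -/
def OP (n k : ℕ) (l : List (EuclideanSpace ℝ (Fin (n + 1)))) : Prop :=
  ∃ ε : Fin (n + 1) → ℝ, (∀ i, ε i = 1 ∨ ε i = -1) ∧ ∀ v ∈ l, v ∈ face ε ∧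
    ∀ i : Fin (n + 1), k < (i : ℕ) → v i = 0

lemma oct_OP (k : ℕ) (hk : k ≤ n) : oct (fun x => -x) (ee n) k ∈ Sup (OP n k) := by
  induction k with
  | zero =>
    refine single_sup ?_
    refine ⟨fun _ => 1, fun _ => Or.inl rfl, ?_⟩
    intro v hv
    rw [List.mem_singleton] at hv
    subst hv
    refine ⟨ee_face hk _ (fun _ _ => rfl), ?_⟩
    intro i hi
    rw [ee_apply hk, if_neg (by omega)]
  | succ k ih =>
    have ih := ih (by omega)
    refine cone_sup (P := OP n k) _ ?_ (Submodule.add_mem _ ih (push_sup _ ?_ ih))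
    · rintro l ⟨ε, h1, h2⟩
      refine ⟨fun i => if (i : ℕ) = k + 1 then 1 else ε i, ?_, ?_⟩
      · intro i
        dsimp only
        split_ifs
        · simp
        · exact h1 i
      · intro v hv
        rcases List.mem_cons.1 hv with rfl | hv
        · refine ⟨ee_face hk _ (fun i hi => by simp [hi]), ?_⟩
          intro i hi
          rw [ee_apply hk, if_neg (by omega)]
        · obtain ⟨⟨h3, h4, h5⟩, h6⟩ := h2 v hv
          have : ∀ i : Fin (n + 1), (if (i : ℕ) = k + 1 then 1 else ε i) * v i = ε i * v i := by
            intro i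
            split_ifs with h
            · rw [h6 i (by omega)]; simp
            · rfl
          refine ⟨⟨h3, ?_, ?_⟩, fun i hi => h6 i (by omega)⟩
          · intro i
            dsimp only
            rw [this]; exact h4 i
          · simp_rw [this]; exact h5
    · rintro l ⟨ε, h1, h2⟩
      refine ⟨fun i => - ε i, ?_, ?_⟩
      · intro i
        rcases h1 i with h | h <;> simp [h]
      · intro v hv
        obtain ⟨w, hw, rfl⟩ := List.mem_map.1 hv
        obtain ⟨⟨h3, h4, h5⟩, h6⟩ := h2 w hw
        refine ⟨⟨by simpa using h3, ?_, ?_⟩, fun i hi => by simp [h6 i hi]⟩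
        · intro i; simpa using h4 i
        · simpa using h5

lemma hem_mesh (j k : ℕ) (hk : k ≤ n) :
    hem (fun x => -x) (ee n) bar j k ∈ Sup (fun l : List (EuclideanSpace ℝ (Fin (n + 1))) =>
      ∃ ε : Fin (n + 1) → ℝ, (∀ i, ε i = 1 ∨ ε i = -1) ∧
        PS (face ε) (((n : ℝ) / (n + 1)) ^ j * 2) l) := by
  induction j with
  | zero =>
    refine sup_mono ?_ (oct_OP k hk)
    rintro l ⟨ε, h1, h2⟩
    refine ⟨ε, h1, fun v hv => (h2 v hv).1, fun v hv w hw => ?_⟩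
    have h3 := (h2 v hv).1.1
    have h4 := (h2 w hw).1.1
    have := dist_le_norm_add_norm v w
    simp; linarith
  | succ j ih =>
    have h1 : hem (fun x => -x) (ee n) bar (j + 1) k = sd bar (k + 1) (hem (fun x => -x) (ee n) bar j k) := by
      rw [hem, Function.iterate_succ_apply']; rfl
    rw [h1]
    have h2 : hem (fun x => -x) (ee n) bar j k ∈ Sup (fun l : List (EuclideanSpace ℝ (Fin (n + 1))) =>
      (∃ ε : Fin (n + 1) → ℝ, (∀ i, ε i = 1 ∨ ε i = -1) ∧
        PS (face ε) (((n : ℝ) / (n + 1)) ^ j * 2) l) ∧ l.length = k + 1) :=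
      fun l hl => ⟨ih hl, hem_len _ _ _ _ _ hl⟩
    refine sup_map (sd bar (k + 1)) ?_ h2
    rintro l ⟨⟨ε, h3, h4⟩, h5⟩
    have h6 := sd_mesh (m := n + 1) (r := (n : ℝ) / (n + 1)) (d := ((n : ℝ) / (n + 1)) ^ j * 2)
      (by positivity) (by positivity) (by
        intro k hk
        have : (k : ℝ) ≤ n + 1 := by exact_mod_cast hk
        rw [div_mul_eq_mul_div, le_div_iff₀ (by positivity)]
        nlinarith) (k + 1) (by omega) (face_convex ε)
        (single_sup (P := fun l => PS (face ε) (((n : ℝ) / (n + 1)) ^ j * 2) l ∧ l.length = k + 1) ⟨h4, h5⟩)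
    refine sup_mono ?_ h6
    intro l hl
    refine ⟨ε, h3, ?_⟩
    rw [pow_succ', mul_assoc]; exact hl

/-- Borsuk-Ulam -/
theorem borsuk_ulam (hn : 0 < n) (G : EuclideanSpace ℝ (Fin (n + 1)) → Fin n → ℝ)
    (hG : ContinuousOn G {0}ᶜ) (hodd : ∀ x, G (-x) = - G x) : ∃ x, x ≠ 0 ∧ G x = 0 := by
  by_contra! hno
  have : Nonempty (Fin n) := ⟨⟨0, hn⟩⟩
  let X : Set (EuclideanSpace ℝ (Fin (n + 1))) := Metric.closedBall 0 1 ∩ {v | ∑ i, |v i| = 1}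
  have hX : IsCompact X := by
    apply (isCompact_closedBall _ _).inter_right
    exact isClosed_eq (by fun_prop) continuous_const
  have hX0 : X ⊆ {0}ᶜ := by
    rintro v ⟨_, hv⟩ h0
    rw [Set.mem_singleton_iff] at h0
    subst h0
    simp at hv
  have hface : ∀ ε : Fin (n + 1) → ℝ, (∀ i, ε i = 1 ∨ ε i = -1) → face ε ⊆ X := by
    rintro ε h v ⟨h1, h2, h3⟩
    refine ⟨mem_closedBall_zero_iff.2 h1, ?_⟩
    show ∑ i, |v i| = 1
    rw [← h3]
    apply Finset.sum_congr rfl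
    intro i _
    rw [← abs_of_nonneg (h2 i), abs_mul]
    rcases h i with h | h <;> simp [h]
  have hGX := hG.mono hX0
  obtain ⟨δ, hδ, hδX⟩ := hX.exists_forall_le' (a := (0 : ℝ)) hGX.norm
    (fun x hx => norm_pos_iff.2 (hno x (hX0 hx)))
  have huc := hX.uniformContinuousOn_of_continuous hGX
  rw [Metric.uniformContinuousOn_iff] at huc
  obtain ⟨η, hη, huc⟩ := huc δ hδ
  have hr1 : (n : ℝ) / (n + 1) < 1 := by rw [div_lt_one (by positivity)]; linarith
  obtain ⟨j, hj⟩ := exists_pow_lt_of_lt_one (half_pos hη) hr1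
  let idx : EuclideanSpace ℝ (Fin (n + 1)) → Fin n := fun x => Classical.epsilon (fun i => δ ≤ |G x i|)
  have hidx : ∀ x ∈ X, δ ≤ |G x (idx x)| := by
    intro x hx
    have : ∃ i, δ ≤ |G x i| := by
      by_contra! h
      have : ‖G x‖ < δ := (pi_norm_lt_iff hδ).2 h
      exact absurd (hδX x hx) (not_le.2 this)
    exact Classical.epsilon_spec this
  have hidx_neg : ∀ x, idx (-x) = idx x := by
    intro x
    simp only [idx, hodd, Pi.neg_apply, abs_neg]
  let lam : EuclideanSpace ℝ (Fin (n + 1)) → Lab n := fun x => toLex (idx x, decide (0 < G x (idx x)))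
  refine tucker (n := n) (fun x => -x) neg_neg (ee n) bar bar_neg j lam ?_
  intro k hk
  refine sup_mono ?_ (hem_mesh j k hk)
  rintro l ⟨ε, h1, h2, h3⟩
  have hlX : ∀ v ∈ l, v ∈ X := fun v hv => hface ε h1 (h2 v hv)
  constructor
  · intro v hv
    have h4 := hidx v (hlX v hv)
    have h5 : G v (idx v) ≠ 0 := by
      intro h; rw [h] at h4; simp at h4; linarith
    show toLex (idx (-v), decide (0 < G (-v) (idx (-v)))) = toLex (idx v, !decide (0 < G v (idx v)))
    rw [hidx_neg, hodd]
    congr 2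
    rw [← decide_not, decide_eq_decide]
    simp only [Pi.neg_apply, Left.neg_pos_iff, not_lt]
    exact ⟨le_of_lt, fun h => lt_of_le_of_ne h h5⟩
  · intro x hx y hy hxy
    obtain ⟨v, hv, rfl⟩ := List.mem_map.1 hx
    obtain ⟨w, hw, rfl⟩ := List.mem_map.1 hy
    have hi : idx v = idx w := hxy
    show decide (0 < G v (idx v)) = decide (0 < G w (idx w))
    have h4 := hidx v (hlX v hv)
    have h5 := hidx w (hlX w hw)
    have h6 : dist (G v) (G w) < δ := by
      apply huc v (hlX v hv) w (hlX w hw)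
      refine (h3 v hv w hw).trans_lt ?_
      linarith
    have h7 := (dist_le_pi_dist (G v) (G w) (idx w)).trans_lt h6
    rw [hi] at h4 ⊢
    rw [Real.dist_eq, abs_lt] at h7
    rw [decide_eq_decide]
    rcases le_abs'.1 h4 with h | h <;> rcases le_abs'.1 h5 with h' | h' <;> constructor <;> intro _ <;> linarith

end octa

end

end BU

section oscillation

open Pointwise Filter Topology

/-- oscillation of `f (·, u)` over `A ∩ H_u^+` (zero if this set is empty) -/
noncomputable def osc (n : ℕ) (A : Set (EuclideanSpace ℝ (Fin n)))
    (f : EuclideanSpace ℝ (Fin n) → EuclideanSpace ℝ (Fin (n + 1)) → ℝ)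
    (u : EuclideanSpace ℝ (Fin (n + 1))) : ℝ :=
  sSup ((fun x => f x u) '' (A ∩ Hplus n u) - (fun x => f x u) '' (A ∩ Hplus n u))

variable {n : ℕ} {A : Set (EuclideanSpace ℝ (Fin n))}
  {f : EuclideanSpace ℝ (Fin n) → EuclideanSpace ℝ (Fin (n + 1)) → ℝ}

lemma Hplus_closed (u : EuclideanSpace ℝ (Fin (n + 1))) : IsClosed (Hplus n u) :=
  isClosed_le (by fun_prop) (by fun_prop)

lemma img_compact (hA : IsCompact A)
    (hf : Continuous fun p : EuclideanSpace ℝ (Fin n) × EuclideanSpace ℝ (Fin (n + 1)) => f p.1 p.2)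
    (u : EuclideanSpace ℝ (Fin (n + 1))) : IsCompact ((fun x => f x u) '' (A ∩ Hplus n u)) :=
  (hA.inter_right (Hplus_closed u)).image
    (hf.comp (Continuous.prodMk continuous_id continuous_const))

lemma osc_bdd (hA : IsCompact A)
    (hf : Continuous fun p : EuclideanSpace ℝ (Fin n) × EuclideanSpace ℝ (Fin (n + 1)) => f p.1 p.2)
    (u : EuclideanSpace ℝ (Fin (n + 1))) :
    BddAbove ((fun x => f x u) '' (A ∩ Hplus n u) - (fun x => f x u) '' (A ∩ Hplus n u)) := by
  obtain ⟨a, ha⟩ := (img_compact hA hf u).bddAbove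
  obtain ⟨b, hb⟩ := (img_compact hA hf u).bddBelow
  refine ⟨a - b, ?_⟩
  rintro _ ⟨x, hx, y, hy, rfl⟩
  exact sub_le_sub (ha hx) (hb hy)

lemma le_osc (hA : IsCompact A)
    (hf : Continuous fun p : EuclideanSpace ℝ (Fin n) × EuclideanSpace ℝ (Fin (n + 1)) => f p.1 p.2)
    {u : EuclideanSpace ℝ (Fin (n + 1))} {x y : EuclideanSpace ℝ (Fin n)}
    (hx : x ∈ A ∩ Hplus n u) (hy : y ∈ A ∩ Hplus n u) : f x u - f y u ≤ osc n A f u :=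
  le_csSup (osc_bdd hA hf u) (Set.sub_mem_sub (Set.mem_image_of_mem _ hx) (Set.mem_image_of_mem _ hy))

lemma osc_nonneg (hA : IsCompact A)
    (hf : Continuous fun p : EuclideanSpace ℝ (Fin n) × EuclideanSpace ℝ (Fin (n + 1)) => f p.1 p.2)
    (u : EuclideanSpace ℝ (Fin (n + 1))) : 0 ≤ osc n A f u := by
  rcases (A ∩ Hplus n u).eq_empty_or_nonempty with h | ⟨x, hx⟩
  · simp [osc, h]
  · simpa using le_osc hA hf hx hx

lemma osc_le {u : EuclideanSpace ℝ (Fin (n + 1))} {c : ℝ} (hc : 0 ≤ c)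
    (h : ∀ x ∈ A ∩ Hplus n u, ∀ y ∈ A ∩ Hplus n u, f x u - f y u ≤ c) : osc n A f u ≤ c := by
  apply Real.sSup_le _ hc
  rintro _ ⟨_, ⟨x, hx, rfl⟩, _, ⟨y, hy, rfl⟩, rfl⟩
  exact h x hx y hy

lemma osc_eq (hA : IsCompact A)
    (hf : Continuous fun p : EuclideanSpace ℝ (Fin n) × EuclideanSpace ℝ (Fin (n + 1)) => f p.1 p.2)
    {u : EuclideanSpace ℝ (Fin (n + 1))} (hne : (A ∩ Hplus n u).Nonempty) :
    osc n A f u = sSup ((fun x => f x u) '' (A ∩ Hplus n u)) -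
      sInf ((fun x => f x u) '' (A ∩ Hplus n u)) :=
  csSup_sub (hne.image _) (img_compact hA hf u).bddAbove (hne.image _) (img_compact hA hf u).bddBelow

lemma Hplus_neg (u : EuclideanSpace ℝ (Fin (n + 1))) : Hplus n (-u) = Hminus n u := by
  ext x
  simp [Hplus, Hminus]

lemma osc_continuousAt (hA : IsCompact A) (hconv : Convex ℝ A)
    (hstrict : ∀ (v : EuclideanSpace ℝ (Fin n)) (c : ℝ), v ≠ 0 →
      (∀ y ∈ A, (∑ j : Fin n, v j * y j) ≤ c) →
      ({y ∈ A | (∑ j : Fin n, v j * y j) = c}).Subsingleton)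
    (hf : Continuous fun p : EuclideanSpace ℝ (Fin n) × EuclideanSpace ℝ (Fin (n + 1)) => f p.1 p.2)
    {u : EuclideanSpace ℝ (Fin (n + 1))} (hu : u ≠ 0) : ContinuousAt (osc n A f) u := by
  rw [ContinuousAt, tendsto_order]
  constructor
  · intro c hc
    rcases lt_or_ge c 0 with hc0 | hc0
    · exact Eventually.of_forall fun v => hc0.trans_le (osc_nonneg hA hf v)
    obtain ⟨x, hx, y, hy, hxy⟩ : ∃ x ∈ A ∩ Hplus n u, ∃ y ∈ A ∩ Hplus n u, c < f x u - f y u := by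
      by_contra! h
      exact absurd (osc_le hc0 h) (not_le.2 hc)
    have hne : x ≠ y := by
      rintro rfl
      simp at hxy; linarith
    obtain ⟨x0, hx0, hx0u⟩ : ∃ x0 ∈ A, u (Fin.last n) < ∑ i : Fin n, u (Fin.castSucc i) * x0 i := by
      by_contra! h
      have hxe : ∑ i : Fin n, u (Fin.castSucc i) * x i = u (Fin.last n) := le_antisymm (h x hx.1) hx.2
      have hye : ∑ i : Fin n, u (Fin.castSucc i) * y i = u (Fin.last n) := le_antisymm (h y hy.1) hy.2
      let v : EuclideanSpace ℝ (Fin n) := WithLp.toLp 2 fun i => u (Fin.castSucc i)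
      by_cases hv : v = 0
      · have hv' : ∀ i : Fin n, u (Fin.castSucc i) = 0 := fun i => by
          have := congrArg (fun w : EuclideanSpace ℝ (Fin n) => w i) hv
          simpa [v] using this
        apply hu
        ext i
        refine Fin.lastCases ?_ (fun i => ?_) i
        · rw [← hxe]; simp [hv']
        · simp [hv']
      · exact hne (hstrict v (u (Fin.last n)) hv h ⟨hx.1, hxe⟩ ⟨hy.1, hye⟩)
    -- move towards x0
    let p : EuclideanSpace ℝ (Fin n) → ℝ → EuclideanSpace ℝ (Fin n) := fun z t => (1 - t) • z + t • x0
    have hp : ∀ z, Continuous (p z) := fun z => by unfold p; fun_prop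
    have hcont : Continuous fun t : ℝ => f (p x t) u - f (p y t) u :=
      (hf.comp ((hp x).prodMk continuous_const)).sub (hf.comp ((hp y).prodMk continuous_const))
    have hev : ∀ᶠ t in 𝓝 (0 : ℝ), c < f (p x t) u - f (p y t) u := by
      apply hcont.continuousAt.eventually_const_lt
      simpa [p] using hxy
    have hev2 : ∀ᶠ t in 𝓝[>] (0 : ℝ), c < f (p x t) u - f (p y t) u := hev.filter_mono nhdsWithin_le_nhds
    have hev3 : ∀ᶠ t in 𝓝[>] (0 : ℝ), t ∈ Set.Ioo (0 : ℝ) 1 := Ioo_mem_nhdsGT one_pos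
    obtain ⟨t, ht, ht0, ht1⟩ := (hev2.and hev3).exists
    have hpA : ∀ z ∈ A, p z t ∈ A := fun z hz =>
      hconv hz hx0 (by linarith) ht0.le (by ring)
    have hpu : ∀ z ∈ A ∩ Hplus n u, u (Fin.last n) < ∑ i : Fin n, u (Fin.castSucc i) * (p z t) i := by
      intro z hz
      have h1 : u (Fin.last n) ≤ ∑ i : Fin n, u (Fin.castSucc i) * z i := hz.2
      have h2 : ∑ i : Fin n, u (Fin.castSucc i) * (p z t) i =
          (1 - t) * ∑ i : Fin n, u (Fin.castSucc i) * z i + t * ∑ i : Fin n, u (Fin.castSucc i) * x0 i := by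
        rw [Finset.mul_sum, Finset.mul_sum, ← Finset.sum_add_distrib]
        apply Finset.sum_congr rfl
        intro i _
        simp [p]; ring
      rw [h2]; nlinarith
    have hpev : ∀ z ∈ A ∩ Hplus n u, ∀ᶠ v in 𝓝 u, p z t ∈ A ∩ Hplus n v := by
      intro z hz
      have : ∀ᶠ v : EuclideanSpace ℝ (Fin (n + 1)) in 𝓝 u,
          v (Fin.last n) < ∑ i : Fin n, v (Fin.castSucc i) * (p z t) i := by
        apply ContinuousAt.eventually_lt _ _ (hpu z hz)
        · exact Continuous.continuousAt (by fun_prop)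
        · exact Continuous.continuousAt (by fun_prop)
      filter_upwards [this] with v hv
      exact ⟨hpA z hz.1, hv.le⟩
    have hcont2 : Continuous fun v => f (p x t) v - f (p y t) v :=
      (hf.comp (continuous_const.prodMk continuous_id)).sub
        (hf.comp (continuous_const.prodMk continuous_id))
    filter_upwards [hpev x hx, hpev y hy, hcont2.continuousAt.eventually_const_lt ht] with v h1 h2 h3
    exact h3.trans_le (le_osc hA hf h1 h2)
  · intro c hc
    obtain ⟨c', hc1, hc2⟩ := exists_between hc
    have hc0 : 0 ≤ c' := (osc_nonneg hA hf u).trans hc1.le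
    have key : ∀ᶠ v in 𝓝 u, ∀ q ∈ A ×ˢ A,
        q.1 ∈ Hplus n v → q.2 ∈ Hplus n v → f q.1 v - f q.2 v < c' := by
      apply (hA.prod hA).eventually_forall_of_forall_eventually
      rintro ⟨x, y⟩ ⟨hx, hy⟩
      have hcl1 : IsClosed {z : EuclideanSpace ℝ (Fin (n + 1)) ×
          (EuclideanSpace ℝ (Fin n) × EuclideanSpace ℝ (Fin n)) | z.2.1 ∈ Hplus n z.1} := by
        change IsClosed {z : EuclideanSpace ℝ (Fin (n + 1)) ×
          (EuclideanSpace ℝ (Fin n) × EuclideanSpace ℝ (Fin n)) |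
            z.1 (Fin.last n) ≤ ∑ i : Fin n, z.1 (Fin.castSucc i) * z.2.1 i}
        exact isClosed_le (by fun_prop) (by fun_prop)
      have hcl2 : IsClosed {z : EuclideanSpace ℝ (Fin (n + 1)) ×
          (EuclideanSpace ℝ (Fin n) × EuclideanSpace ℝ (Fin n)) | z.2.2 ∈ Hplus n z.1} := by
        change IsClosed {z : EuclideanSpace ℝ (Fin (n + 1)) ×
          (EuclideanSpace ℝ (Fin n) × EuclideanSpace ℝ (Fin n)) |
            z.1 (Fin.last n) ≤ ∑ i : Fin n, z.1 (Fin.castSucc i) * z.2.2 i}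
        exact isClosed_le (by fun_prop) (by fun_prop)
      have hc3 : Continuous fun z : EuclideanSpace ℝ (Fin (n + 1)) ×
          (EuclideanSpace ℝ (Fin n) × EuclideanSpace ℝ (Fin n)) => f z.2.1 z.1 - f z.2.2 z.1 :=
        (hf.comp (by fun_prop : Continuous fun z : EuclideanSpace ℝ (Fin (n + 1)) ×
          (EuclideanSpace ℝ (Fin n) × EuclideanSpace ℝ (Fin n)) => (z.2.1, z.1))).sub
        (hf.comp (by fun_prop : Continuous fun z : EuclideanSpace ℝ (Fin (n + 1)) ×
          (EuclideanSpace ℝ (Fin n) × EuclideanSpace ℝ (Fin n)) => (z.2.2, z.1)))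
      by_cases h1 : x ∈ Hplus n u
      · by_cases h2 : y ∈ Hplus n u
        · have h3 : f x u - f y u < c' := (le_osc hA hf ⟨hx, h1⟩ ⟨hy, h2⟩).trans_lt hc1
          have := (hc3.tendsto (u, (x, y))).eventually_lt_const h3
          filter_upwards [this] with z hz _ _
          exact hz
        · have := hcl2.isOpen_compl.mem_nhds (x := (u, (x, y))) h2
          filter_upwards [this] with z hz _ h
          exact absurd h hz
      · have := hcl1.isOpen_compl.mem_nhds (x := (u, (x, y))) h1
        filter_upwards [this] with z hz h
        exact absurd h hz
    filter_upwards [key] with v hv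
    exact (osc_le hc0 fun x hx y hy => (hv (x, y) ⟨hx.1, hy.1⟩ hx.2 hy.2).le).trans_lt hc2

lemma osc_const (hA : IsCompact A)
    (hf : Continuous fun p : EuclideanSpace ℝ (Fin n) × EuclideanSpace ℝ (Fin (n + 1)) => f p.1 p.2)
    {u : EuclideanSpace ℝ (Fin (n + 1))} (h0 : osc n A f u = 0) :
    ∀ x ∈ A ∩ Hplus n u, ∀ y ∈ A ∩ Hplus n u, f x u = f y u := by
  intro x hx y hy
  have h1 := le_osc hA hf hx hy
  have h2 := le_osc hA hf hy hx
  linarith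

lemma Hplus_union (u : EuclideanSpace ℝ (Fin (n + 1))) (x : EuclideanSpace ℝ (Fin n)) :
    x ∈ Hplus n u ∨ x ∈ Hminus n u :=
  le_total (u (Fin.last n)) (∑ i : Fin n, u (Fin.castSucc i) * x i)

lemma inter_eq_of_empty {B P Q : Set (EuclideanSpace ℝ (Fin n))} (h : ∀ x, x ∈ P ∨ x ∈ Q)
    (he : B ∩ P = ∅) : B ∩ Q = B := by
  rw [Set.inter_eq_left]
  intro x hx
  rcases h x with h | h
  · have : x ∈ B ∩ P := ⟨hx, h⟩
    rw [he] at this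
    exact absurd this (Set.notMem_empty x)
  · exact h

lemma final (hA : IsCompact A)
    (hf : Continuous fun p : EuclideanSpace ℝ (Fin n) × EuclideanSpace ℝ (Fin (n + 1)) => f p.1 p.2)
    (hanti : ∀ x u, f x (-u) = -f x u)
    {u : EuclideanSpace ℝ (Fin (n + 1))} (h0 : osc n A f u = osc n A f (-u)) :
    ((A ∩ Hplus n u).Nonempty ∧ (A ∩ Hminus n u).Nonempty ∧
        sSup ((fun x => f x u) '' (A ∩ Hplus n u)) -
            sInf ((fun x => f x u) '' (A ∩ Hplus n u)) =
          sSup ((fun x => f x u) '' (A ∩ Hminus n u)) -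
            sInf ((fun x => f x u) '' (A ∩ Hminus n u))) ∨
      (((A ∩ Hplus n u = ∅ ∧ A ∩ Hminus n u = A) ∨
          (A ∩ Hminus n u = ∅ ∧ A ∩ Hplus n u = A)) ∧
        ∃ c : ℝ, ∀ x ∈ A, f x u = c) := by
  have hconst : ∀ B : Set (EuclideanSpace ℝ (Fin n)), (∀ x ∈ B, ∀ y ∈ B, f x u = f y u) →
      ∃ c : ℝ, ∀ x ∈ B, f x u = c := by
    intro B hB
    rcases B.eq_empty_or_nonempty with rfl | ⟨y, hy⟩
    · exact ⟨0, by simp⟩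
    · exact ⟨f y u, fun x hx => hB x hx y hy⟩
  have hemp : ∀ u, A ∩ Hplus n u = ∅ → osc n A f u = 0 := fun u h => by simp [osc, h]
  rcases (A ∩ Hplus n u).eq_empty_or_nonempty with h1 | h1
  · right
    have h2 := inter_eq_of_empty (Hplus_union u) h1
    refine ⟨Or.inl ⟨h1, h2⟩, hconst A ?_⟩
    have h3 := osc_const hA hf (h0.symm.trans (hemp u h1))
    rw [Hplus_neg, h2] at h3
    intro x hx y hy
    have := h3 x hx y hy
    rw [hanti, hanti] at this
    linarith
  rcases (A ∩ Hminus n u).eq_empty_or_nonempty with h2 | h2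
  · right
    have h3 := inter_eq_of_empty (fun x => (Hplus_union u x).symm) h2
    refine ⟨Or.inr ⟨h2, h3⟩, hconst A ?_⟩
    have h4 := osc_const hA hf (h0.trans (hemp (-u) (by rw [Hplus_neg]; exact h2)))
    rwa [h3] at h4
  left
  refine ⟨h1, h2, ?_⟩
  rw [← osc_eq hA hf h1, h0, osc_eq hA hf (by rw [Hplus_neg]; exact h2), Hplus_neg]
  have : (fun x => f x (-u)) '' (A ∩ Hminus n u) = - ((fun x => f x u) '' (A ∩ Hminus n u)) := by
    rw [← Set.image_neg_eq_neg, Set.image_image]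
    simp only [hanti]
  rw [this, Real.sSup_neg, Real.sInf_neg]
  ring

end oscillation

theorem borsuk_ulam_nlp (n : ℕ) (A : Fin n → Set (EuclideanSpace ℝ (Fin n)))
    (hne : ∀ i, (A i).Nonempty) (hcomp : ∀ i, IsCompact (A i)) (hconv : ∀ i, Convex ℝ (A i))
    (hint : ∀ i, (interior (A i)).Nonempty)
    -- strict convexity: every supporting hyperplane meets `A i` in at most one point
    (hstrict : ∀ i (v : EuclideanSpace ℝ (Fin n)) (c : ℝ), v ≠ 0 →
      (∀ y ∈ A i, (∑ j : Fin n, v j * y j) ≤ c) →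
      ({y ∈ A i | (∑ j : Fin n, v j * y j) = c}).Subsingleton)
    (f : Fin n → EuclideanSpace ℝ (Fin n) → EuclideanSpace ℝ (Fin (n + 1)) → ℝ)
    (hf : ∀ i, Continuous fun p : EuclideanSpace ℝ (Fin n) × EuclideanSpace ℝ (Fin (n + 1)) =>
      f i p.1 p.2)
    (hanti : ∀ i x u, f i x (-u) = -f i x u) :
    ∃ u ∈ Metric.sphere (0 : EuclideanSpace ℝ (Fin (n + 1))) 1, ∀ i : Fin n,
      ((A i ∩ Hplus n u).Nonempty ∧ (A i ∩ Hminus n u).Nonempty ∧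
        sSup ((fun x => f i x u) '' (A i ∩ Hplus n u)) -
            sInf ((fun x => f i x u) '' (A i ∩ Hplus n u)) =
          sSup ((fun x => f i x u) '' (A i ∩ Hminus n u)) -
            sInf ((fun x => f i x u) '' (A i ∩ Hminus n u))) ∨
      (((A i ∩ Hplus n u = ∅ ∧ A i ∩ Hminus n u = A i) ∨
          (A i ∩ Hminus n u = ∅ ∧ A i ∩ Hplus n u = A i)) ∧
        ∃ c : ℝ, ∀ x ∈ A i, f i x u = c) := by
  rcases Nat.eq_zero_or_pos n with rfl | hn
  · exact ⟨EuclideanSpace.single 0 1, by simp, fun i => i.elim0⟩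
  let g : EuclideanSpace ℝ (Fin (n + 1)) → Fin n → ℝ :=
    fun u i => osc n (A i) (f i) u - osc n (A i) (f i) (-u)
  have hg : ∀ u, u ≠ 0 → ContinuousAt g u := by
    intro u hu
    rw [continuousAt_pi]
    intro i
    have h1 := fun {w} => osc_continuousAt (u := w) (hcomp i) (hconv i) (hstrict i) (hf i)
    refine (h1 hu).sub ?_
    exact ContinuousAt.comp (f := fun u : EuclideanSpace ℝ (Fin (n + 1)) => -u)
      (h1 (neg_ne_zero.2 hu)) continuous_neg.continuousAt
  have hgodd : ∀ u, g (-u) = - g u := by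
    intro u
    funext i
    simp [g]
  obtain ⟨x, hx, hGx⟩ := BU.borsuk_ulam hn (fun x => g (‖x‖⁻¹ • x)) (by
    intro x hx
    have hx : x ≠ 0 := hx
    apply ContinuousAt.continuousWithinAt
    have h1 : ‖x‖⁻¹ • x ≠ 0 := smul_ne_zero (inv_ne_zero (norm_ne_zero_iff.2 hx)) hx
    refine ContinuousAt.comp (f := fun x : EuclideanSpace ℝ (Fin (n + 1)) => ‖x‖⁻¹ • x) (hg _ h1) ?_
    exact (continuous_norm.continuousAt.inv₀ (norm_ne_zero_iff.2 hx)).smul continuousAt_id) (by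
    intro x
    simp only [norm_neg, smul_neg, hgodd])
  refine ⟨‖x‖⁻¹ • x, ?_, ?_⟩
  · rw [mem_sphere_zero_iff_norm, norm_smul, norm_inv, norm_norm,
      inv_mul_cancel₀ (norm_ne_zero_iff.2 hx)]
  · intro i
    refine final (hcomp i) (hf i) (hanti i) ?_
    have := congrFun hGx i
    exact sub_eq_zero.1 this
end
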